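/- arXiv:math/0508064 — 2 statements merged into one kernel-verified Lean document; each statement's English description precedes it below -/
import Mathlib

section
/- Let b ≥ 2 and fix i with 1 ≤ i ≤ b−1. Let μ = (i₁, …, i_m) be a word (finite list) in the alphabet {1, …, b−1} with m ≥ 2, i₁ = i_m = i, and i_p < i for all p with 1 < p < m. Then there exists a word μ′ obtained from μ by finitely many elementary commutations such that either for some j with 1 ≤ j ≤ i the pair (j, j) occurs as a consecutive subword (infix) of μ′, or for some j with 2 ≤ j ≤ i the triple (j, j−1, j) occurs as a consecutive subword of μ′. -/
/-- An elementary commutation: replace `u ++ [p, q] ++ v` by `u ++ [q, p] ++ v`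
when `|p - q| > 1`. -/
def CommStep (w w' : List ℕ) : Prop :=
  ∃ (u v : List ℕ) (p q : ℕ), (p + 1 < q ∨ q + 1 < p) ∧
    w = u ++ [p, q] ++ v ∧ w' = u ++ [q, p] ++ v

theorem bw_ctx (u v : List ℕ) {a c : List ℕ} (h : Relation.ReflTransGen CommStep a c) :
    Relation.ReflTransGen CommStep (u ++ a ++ v) (u ++ c ++ v) := by
  induction h with
  | refl => exact Relation.ReflTransGen.refl
  | tail _ hs ih =>
    refine ih.tail ?_
    obtain ⟨x, y, p, q, hpq, rfl, rfl⟩ := hs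
    exact ⟨u ++ x, y ++ v, p, q, hpq, by simp, by simp⟩

theorem bw_right (i : ℕ) (w : List ℕ) (h : ∀ x ∈ w, x + 1 < i) :
    Relation.ReflTransGen CommStep (i :: w) (w ++ [i]) := by
  induction w with
  | nil => exact Relation.ReflTransGen.refl
  | cons a w ih =>
    have h1 : CommStep (i :: a :: w) (a :: i :: w) :=
      ⟨[], w, i, a, Or.inr (h a (by simp)), by simp, by simp⟩
    have h2 := bw_ctx [a] [] (ih (fun x hx => h x (by simp [hx])))
    exact Relation.ReflTransGen.head h1 (by simpa using h2)

theorem bw_left (i : ℕ) (w : List ℕ) (h : ∀ x ∈ w, x + 1 < i) :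
    Relation.ReflTransGen CommStep (w ++ [i]) (i :: w) := by
  induction w with
  | nil => exact Relation.ReflTransGen.refl
  | cons a w ih =>
    have h1 : CommStep (a :: i :: w) (i :: a :: w) :=
      ⟨[], w, a, i, Or.inl (h a (by simp)), by simp, by simp⟩
    have h2 := bw_ctx [a] [] (ih (fun x hx => h x (by simp [hx])))
    exact Relation.ReflTransGen.tail (by simpa using h2) h1

theorem bw_main (i : ℕ) : ∀ (w : List ℕ), 1 ≤ i → (∀ x ∈ w, 1 ≤ x ∧ x < i) →
    ∃ μ' : List ℕ, Relation.ReflTransGen CommStep (i :: w ++ [i]) μ' ∧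
      ((∃ j, 1 ≤ j ∧ j ≤ i ∧ [j, j] <:+: μ') ∨
       (∃ j, 2 ≤ j ∧ j ≤ i ∧ [j, j - 1, j] <:+: μ')) := by
  induction i with
  | zero => intro w h; omega
  | succ k ih =>
    intro w _ hw
    have key : ∀ l : List ℕ, (∀ x ∈ l, x ∈ w) → k ∉ l → ∀ x ∈ l, x + 1 < k + 1 := by
      intro l hl hk x hx
      have h1 := (hw x (hl x hx)).2
      have h2 : x ≠ k := fun e => hk (e ▸ hx)
      omega
    by_cases hk : k ∈ w
    · obtain ⟨x, y, rfl, hx⟩ := List.eq_append_cons_of_mem hk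
      have hk1 := (hw k hk).1
      by_cases hy : k ∈ y
      · obtain ⟨y, z, rfl, hy'⟩ := List.eq_append_cons_of_mem hy
        have hy2 := key y (by intro t ht; simp [ht]) hy'
        obtain ⟨ν, hν, hc⟩ := ih y hk1
          (fun t ht => ⟨(hw t (by simp [ht])).1, by have := hy2 t ht; omega⟩)
        refine ⟨((k + 1) :: x) ++ ν ++ (z ++ [k + 1]), ?_, ?_⟩
        · simpa using bw_ctx ((k + 1) :: x) (z ++ [k + 1]) hν
        · have hin : ν <:+: ((k + 1) :: x) ++ ν ++ (z ++ [k + 1]) := ⟨_, _, rfl⟩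
          rcases hc with ⟨j, h1, h2, h3⟩ | ⟨j, h1, h2, h3⟩
          · exact Or.inl ⟨j, h1, by omega, h3.trans hin⟩
          · exact Or.inr ⟨j, h1, by omega, h3.trans hin⟩
      · have hx2 := key x (by intro t ht; simp [ht]) hx
        have hy2 := key y (by intro t ht; simp [ht]) hy
        refine ⟨x ++ [k + 1, k, k + 1] ++ y, ?_, Or.inr ⟨k + 1, by omega, le_rfl, ⟨x, y, by simp⟩⟩⟩
        have h1 := bw_ctx [] (k :: y ++ [k + 1]) (bw_right (k + 1) x hx2)
        have h2 := bw_ctx (x ++ [k + 1, k]) [] (bw_left (k + 1) y hy2)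
        refine Relation.ReflTransGen.trans (b := x ++ [k + 1, k] ++ y ++ [k + 1]) ?_ ?_
        · simpa using h1
        · simpa using h2
    · have h2 := key w (fun _ h => h) hk
      refine ⟨w ++ [k + 1, k + 1], ?_, Or.inl ⟨k + 1, by omega, le_rfl, ⟨w, [], by simp⟩⟩⟩
      simpa using bw_ctx [] [k + 1] (bw_right (k + 1) w h2)

theorem braid_word_reduction (b i : ℕ) (hb : 2 ≤ b) (hi1 : 1 ≤ i) (hi2 : i ≤ b - 1)
    (μ : List ℕ) (hm : 2 ≤ μ.length)
    (hletters : ∀ x ∈ μ, 1 ≤ x ∧ x ≤ b - 1)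
    (hhead : μ.head? = some i) (hlast : μ.getLast? = some i)
    (hint : ∀ (p : ℕ) (hp : p < μ.length), 0 < p → p + 1 < μ.length → μ.get ⟨p, hp⟩ < i) :
    ∃ μ' : List ℕ, Relation.ReflTransGen CommStep μ μ' ∧
      ((∃ j, 1 ≤ j ∧ j ≤ i ∧ [j, j] <:+: μ') ∨
       (∃ j, 2 ≤ j ∧ j ≤ i ∧ [j, j - 1, j] <:+: μ')) := by
  obtain ⟨w, rfl⟩ : ∃ w, μ = i :: w ++ [i] := by
    cases μ with
    | nil => simp at hm
    | cons a t =>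
      simp only [List.head?_cons, Option.some.injEq] at hhead
      subst hhead
      rcases List.eq_nil_or_concat t with rfl | ⟨w, c, rfl⟩
      · simp at hm
      · refine ⟨w, ?_⟩
        have : (a :: (w ++ [c])).getLast? = some c := by
          rw [← List.cons_append, List.getLast?_append]; simp
        rw [List.concat_eq_append, this] at hlast
        simp at hlast
        simp [hlast]
  refine bw_main i w hi1 ?_
  intro x hx
  refine ⟨(hletters x (by simp [hx])).1, ?_⟩
  obtain ⟨n, hn, rfl⟩ := List.getElem_of_mem hx
  have := hint (n + 1) (by simp; omega) (by omega) (by simp; omega)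
  simpa [List.getElem_append, hn] using this
end

section
/- Let ℚ[x, y] be the polynomial ring in two variables over ℚ, and let A be the ℚ-subalgebra of ℚ[x, y] generated by the elementary symmetric polynomials s₁ = x + y and s₂ = x·y. Then ℚ[x, y] is a free A-module of rank two with basis {1, y}; i.e., every polynomial p ∈ ℚ[x, y] can be written uniquely as p = f + g·y with f, g ∈ A. -/
open MvPolynomial

theorem aux_swap (f : MvPolynomial (Fin 2) ℚ)
    (hf : f ∈ Algebra.adjoin ℚ {(X 0 : MvPolynomial (Fin 2) ℚ) + X 1, X 0 * X 1}) :
    rename (Equiv.swap (0 : Fin 2) 1) f = f := by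
  induction hf using Algebra.adjoin_induction with
  | mem x hx =>
    rcases hx with rfl | rfl
    · simp [add_comm]
    · simp [mul_comm]
  | algebraMap r => simp [MvPolynomial.algebraMap_eq]
  | add x y _ _ hx hy => rw [map_add, hx, hy]
  | mul x y _ _ hx hy => rw [map_mul, hx, hy]

theorem aux_exists (p : MvPolynomial (Fin 2) ℚ) :
    ∃ f ∈ Algebra.adjoin ℚ {(X 0 : MvPolynomial (Fin 2) ℚ) + X 1, X 0 * X 1},
    ∃ g ∈ Algebra.adjoin ℚ {(X 0 : MvPolynomial (Fin 2) ℚ) + X 1, X 0 * X 1},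
      p = f + g * X 1 := by
  have h1 : (X 0 : MvPolynomial (Fin 2) ℚ) + X 1 ∈
      Algebra.adjoin ℚ {(X 0 : MvPolynomial (Fin 2) ℚ) + X 1, X 0 * X 1} :=
    Algebra.subset_adjoin (by simp)
  have h2 : (X 0 : MvPolynomial (Fin 2) ℚ) * X 1 ∈
      Algebra.adjoin ℚ {(X 0 : MvPolynomial (Fin 2) ℚ) + X 1, X 0 * X 1} :=
    Algebra.subset_adjoin (by simp)
  induction p using MvPolynomial.induction_on with
  | C a => exact ⟨C a, Subalgebra.algebraMap_mem _ a, 0, zero_mem _, by simp⟩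
  | add p q hp hq =>
    obtain ⟨f, hf, g, hg, rfl⟩ := hp
    obtain ⟨f', hf', g', hg', rfl⟩ := hq
    exact ⟨f + f', add_mem hf hf', g + g', add_mem hg hg', by ring⟩
  | mul_X p i hp =>
    obtain ⟨f, hf, g, hg, rfl⟩ := hp
    fin_cases i
    · refine ⟨_, add_mem (mul_mem hf h1) (mul_mem hg h2), _, neg_mem hf, ?_⟩
      simp only [Fin.zero_eta]
      ring
    · refine ⟨_, neg_mem (mul_mem hg h2), _, add_mem hf (mul_mem hg h1), ?_⟩
      simp only [Fin.mk_one]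
      ring

theorem free_of_rank_two_over_symmetric (p : MvPolynomial (Fin 2) ℚ) :
    ∃! fg : Algebra.adjoin ℚ {(X 0 : MvPolynomial (Fin 2) ℚ) + X 1, X 0 * X 1} ×
        Algebra.adjoin ℚ {(X 0 : MvPolynomial (Fin 2) ℚ) + X 1, X 0 * X 1},
      p = (fg.1 : MvPolynomial (Fin 2) ℚ) + (fg.2 : MvPolynomial (Fin 2) ℚ) * X 1 := by
  obtain ⟨f, hf, g, hg, rfl⟩ := aux_exists p
  refine ⟨(⟨f, hf⟩, ⟨g, hg⟩), rfl, ?_⟩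
  rintro ⟨⟨f', hf'⟩, ⟨g', hg'⟩⟩ h
  simp only at h
  have h' := congrArg (rename (Equiv.swap (0 : Fin 2) 1)) h
  simp only [map_add, map_mul, aux_swap f hf, aux_swap g hg, aux_swap f' hf', aux_swap g' hg',
    rename_X, Equiv.swap_apply_right] at h'
  have hne : (X 1 : MvPolynomial (Fin 2) ℚ) - X 0 ≠ 0 := by
    rw [sub_ne_zero]
    intro h
    exact absurd (X_injective h) (by decide)
  have hz : (g' - g) * ((X 1 : MvPolynomial (Fin 2) ℚ) - X 0) = 0 := by
    linear_combination h' - h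
  have hgg : g' = g := sub_eq_zero.mp ((mul_eq_zero.mp hz).resolve_right hne)
  subst hgg
  have hff : f' = f := (add_right_cancel h).symm
  subst hff
  rfl
end
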